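/- Let α > 0 and f ∈ L¹[0,b]. Then f belongs to the range I^α(L¹[0,b]) if and only if f ∈ X_α and D^s(I^{⌈α⌉−α} f)(0) = 0 for every s ∈ {0, 1, …, ⌈α⌉−1}, where D^s denotes the s-th (weak) derivative. -/

import Mathlib

open MeasureTheory Set Filter Topology

open Classical in
/-- Riemann–Liouville fractional integral of order `α` with base point `0`;
`RL 0` is the identity operator. -/
noncomputable def RL (α : ℝ) (f : ℝ → ℝ) : ℝ → ℝ := fun t =>
  if α = 0 then f t
  else (1 / Real.Gamma α) * ∫ s in (0:ℝ)..t, (t - s) ^ (α - 1) * f s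

/-- `g ∈ AC[0,b]`: `g t = g 0 + ∫₀ᵗ φ` for some `φ ∈ L¹[0,b]`. -/
def MemAC (b : ℝ) (g : ℝ → ℝ) : Prop :=
  ∃ φ : ℝ → ℝ, IntegrableOn φ (Set.Icc 0 b) volume ∧
    ∀ t ∈ Set.Icc (0:ℝ) b, g t = g 0 + ∫ s in (0:ℝ)..t, φ s

/-- `g ∈ AC^n[0,b]`: `g ∈ C^{n-1}[0,b]` and `D^{n-1} g ∈ AC[0,b]`. -/
def MemACn (b : ℝ) (n : ℕ) (g : ℝ → ℝ) : Prop :=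
  ContDiffOn ℝ (n - 1 : ℕ) g (Set.Icc 0 b) ∧
    MemAC b (iteratedDerivWithin (n - 1) g (Set.Icc 0 b))

/-- `f ∈ X_α`, the space of functions with summable fractional derivative of order `α`:
`f ∈ L¹[0,b]` and (for `α ≠ 0`) `I^{⌈α⌉-α} f ∈ AC^{⌈α⌉}[0,b]`
(as an element of `L¹`, i.e. it has an `AC^{⌈α⌉}` representative); `X_0 = L¹[0,b]`. -/
def MemX (b : ℝ) (α : ℝ) (f : ℝ → ℝ) : Prop :=
  IntegrableOn f (Set.Icc 0 b) volume ∧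
    (α ≠ 0 → ∃ g : ℝ → ℝ,
      g =ᵐ[volume.restrict (Set.Icc 0 b)] RL ((⌈α⌉₊ : ℝ) - α) f ∧ MemACn b ⌈α⌉₊ g)

/-!
Write `n = ⌈α⌉` and `β = n - α ≥ 0`. Associativity of convolution and the Beta integral give the
semigroup law `I^β I^α = I^{α+β}` on `L¹[0,b]`; together with Lebesgue differentiation, which makes
`I^1` injective, it shows that every `I^β` is injective. Hence `f = I^α φ` is equivalent to
`I^β f = I^n φ`, and by the fundamental theorem of calculus the `n`-fold primitives of integrable
functions are exactly the elements of `AC^n[0,b]` whose derivatives of order below `n` vanish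
at `0`.
-/

theorem support_indicator_Ioc_subset_Ioi {M : Type*} [Zero M] (a b : ℝ) (f : ℝ → M) :
    Function.support ((Ioc a b).indicator f) ⊆ Ioi a :=
  support_indicator_subset.trans Ioc_subset_Ioi_self

theorem integrable_indicator_Ioc {E : Type*} [NormedAddCommGroup E] {μ : Measure ℝ} {a b : ℝ}
    {f : ℝ → E} (hf : IntegrableOn f (Icc a b) μ) : Integrable ((Ioc a b).indicator f) μ :=
  (integrable_indicator_iff measurableSet_Ioc).2 (hf.mono_set Ioc_subset_Icc_self)

section Convolution

open ContinuousLinearMap Function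
open scoped Convolution

theorem ae_convolution_lsmul_assoc {G E : Type*} [AddGroup G] [MeasurableSpace G]
    [MeasurableAdd₂ G] [MeasurableNeg G] {μ : Measure G} [SFinite μ] [μ.IsAddRightInvariant]
    [NormedAddCommGroup E] [NormedSpace ℝ E] [CompleteSpace E]
    {f g : G → ℝ} {k : G → E} (hf : Integrable f μ) (hg : Integrable g μ) (hk : Integrable k μ) :
    (f ⋆[lsmul ℝ ℝ, μ] g) ⋆[lsmul ℝ ℝ, μ] k
      =ᵐ[μ] f ⋆[lsmul ℝ ℝ, μ] (g ⋆[lsmul ℝ ℝ, μ] k) := by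
  have hgk : Integrable ((fun x => ‖g x‖) ⋆[mul ℝ ℝ, μ] fun x => ‖k x‖) μ :=
    hg.norm.integrable_convolution _ hk.norm
  filter_upwards [hf.norm.ae_convolution_exists (mul ℝ ℝ) hgk] with x hx
  exact convolution_assoc _ _ _ _ (fun a b c => smul_assoc a b c)
    hf.aestronglyMeasurable hg.aestronglyMeasurable hk.aestronglyMeasurable
    (hf.ae_convolution_exists _ hg) (hg.norm.ae_convolution_exists _ hk.norm) hx

variable {E : Type*} [NormedAddCommGroup E] [NormedSpace ℝ E] {f : ℝ → ℝ} {k : ℝ → E}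

theorem support_convolution_subset_Ioi (hf : support f ⊆ Ioi 0) (hk : support k ⊆ Ioi 0) :
    support (f ⋆ k) ⊆ Ioi 0 :=
  (support_convolution_subset _).trans <| add_subset_iff.2 fun _ hs _ ht =>
    mem_Ioi.2 (add_pos (hf hs) (hk ht))

theorem convolution_apply_of_support_subset_Ioi (hf : support f ⊆ Ioi 0)
    (hk : support k ⊆ Ioi 0) {t : ℝ} (ht : 0 ≤ t) :
    (f ⋆ k) t = ∫ s in (0:ℝ)..t, f s • k (t - s) := by
  rcases ht.eq_or_lt with rfl | ht
  · rw [intervalIntegral.integral_same]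
    exact notMem_support.1 fun h => self_notMem_Ioi (support_convolution_subset_Ioi hf hk h)
  · have h := posConvolution_eq_convolution_indicator f k (lsmul ℝ ℝ) volume
    rw [indicator_eq_self.2 hf, indicator_eq_self.2 hk] at h
    rw [← h, posConvolution, indicator_of_mem (mem_Ioi.2 ht)]
    rfl

end Convolution

theorem integral_rpow_mul_sub_rpow {u v t : ℝ} (hu : 0 < u) (hv : 0 < v) (ht : 0 < t) :
    ∫ x in (0:ℝ)..t, x ^ (u - 1) * (t - x) ^ (v - 1) =
      t ^ (u + v - 1) * (Real.Gamma u * Real.Gamma v / Real.Gamma (u + v)) := by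
  have hbeta := Complex.betaIntegral_scaled (u : ℂ) (v : ℂ) ht
  rw [Complex.betaIntegral_eq_Gamma_mul_div _ _ (by simpa) (by simpa)] at hbeta
  apply Complex.ofReal_injective
  rw [← intervalIntegral.integral_ofReal]
  calc ∫ x in (0:ℝ)..t, ((x ^ (u - 1) * (t - x) ^ (v - 1) : ℝ) : ℂ)
      = ∫ x in (0:ℝ)..t, (x : ℂ) ^ ((u : ℂ) - 1) * ((t : ℂ) - x) ^ ((v : ℂ) - 1) := by
        refine intervalIntegral.integral_congr fun x hx => ?_
        rw [uIcc_of_le ht.le] at hx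
        simp [Complex.ofReal_cpow hx.1, Complex.ofReal_cpow (sub_nonneg.2 hx.2)]
    _ = (t : ℂ) ^ ((u : ℂ) + v - 1) *
          (Complex.Gamma u * Complex.Gamma v / Complex.Gamma (u + v)) := hbeta
    _ = _ := by simp [Complex.ofReal_cpow ht.le, ← Complex.Gamma_ofReal]

section RL

variable {b α β : ℝ} {f g : ℝ → ℝ}

theorem RL_zero (f : ℝ → ℝ) : RL 0 f = f := by
  ext t
  simp [RL]

theorem RL_apply (hα : α ≠ 0) (f : ℝ → ℝ) (t : ℝ) :
    RL α f t = (1 / Real.Gamma α) * ∫ s in (0:ℝ)..t, (t - s) ^ (α - 1) * f s :=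
  if_neg hα

theorem RL_one_apply (f : ℝ → ℝ) (t : ℝ) : RL 1 f t = ∫ s in (0:ℝ)..t, f s := by
  simp [RL]

theorem RL_one_apply_zero (f : ℝ → ℝ) : RL 1 f 0 = 0 := by
  simp [RL_one_apply]

theorem RL_rpow_div_Gamma (hα : 0 < α) (hβ : 0 < β) {t : ℝ} (ht : 0 < t) :
    RL β (fun x => x ^ (α - 1) / Real.Gamma α) t = t ^ (α + β - 1) / Real.Gamma (α + β) := by
  have hΓα : Real.Gamma α ≠ 0 := (Real.Gamma_pos_of_pos hα).ne'
  have hΓβ : Real.Gamma β ≠ 0 := (Real.Gamma_pos_of_pos hβ).ne'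
  have hcomm : ∀ x, (t - x) ^ (β - 1) * (x ^ (α - 1) / Real.Gamma α)
      = (1 / Real.Gamma α) * (x ^ (α - 1) * (t - x) ^ (β - 1)) := fun x => by ring
  simp_rw [RL_apply hβ.ne', hcomm]
  rw [intervalIntegral.integral_const_mul, integral_rpow_mul_sub_rpow hα hβ ht]
  field_simp

theorem RL_congr_ae (h : f =ᵐ[volume.restrict (Icc 0 b)] g) :
    RL α f =ᵐ[volume.restrict (Icc 0 b)] RL α g := by
  rcases eq_or_ne α 0 with rfl | hα
  · simpa only [RL_zero] using h
  filter_upwards [ae_restrict_mem measurableSet_Icc] with t ht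
  have hsub : uIoc 0 t ⊆ Icc 0 b := by
    rw [uIoc_of_le ht.1]
    exact Ioc_subset_Icc_self.trans (Icc_subset_Icc_right ht.2)
  rw [RL_apply hα, RL_apply hα, intervalIntegral.integral_congr_ae_restrict]
  filter_upwards [ae_restrict_of_ae_restrict_of_subset hsub h] with s hs
  rw [hs]

/-- The Riemann–Liouville kernel `t ^ (α - 1) / Γ(α)` cut off to `(0, b]`. On `[0, b]`, convolving
with it a function supported in `(0, ∞)` is the same as applying `RL α`, while the cut-off makes it
integrable on the whole line. -/
noncomputable def truncatedRLKernel (b α : ℝ) : ℝ → ℝ :=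
  (Ioc 0 b).indicator fun t => t ^ (α - 1) / Real.Gamma α

theorem integrable_truncatedRLKernel (b : ℝ) (hα : 0 < α) :
    Integrable (truncatedRLKernel b α) := by
  have hpow : IntervalIntegrable (fun t : ℝ => t ^ (α - 1)) volume 0 b :=
    intervalIntegral.intervalIntegrable_rpow' (by linarith)
  exact (integrable_indicator_iff measurableSet_Ioc).2 (hpow.1.div_const _)

open scoped Convolution

theorem convolution_eqOn_RL {F k : ℝ → ℝ} (hα : α ≠ 0) (hF : Function.support F ⊆ Ioi 0)
    (hk : Function.support k ⊆ Ioi 0) (hFf : EqOn F f (Ioc 0 b))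
    (hkα : EqOn k (fun t => t ^ (α - 1) / Real.Gamma α) (Ioc 0 b)) :
    EqOn (F ⋆ k) (RL α f) (Icc 0 b) := by
  intro t ht
  rw [convolution_apply_of_support_subset_Ioi hF hk ht.1, RL_apply hα,
    ← intervalIntegral.integral_const_mul]
  refine intervalIntegral.integral_congr_Ioo_of_le ht.1 fun s hs => ?_
  have hs' : t - s ∈ Ioc 0 b := ⟨sub_pos.2 hs.2, by linarith [hs.1, ht.2]⟩
  simp only [hFf ⟨hs.1, hs.2.le.trans ht.2⟩, hkα hs', smul_eq_mul]
  ring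

theorem indicator_convolution_truncatedRLKernel_eqOn (hα : α ≠ 0) (f : ℝ → ℝ) :
    EqOn ((Ioc 0 b).indicator f ⋆ truncatedRLKernel b α) (RL α f) (Icc 0 b) :=
  convolution_eqOn_RL hα (support_indicator_Ioc_subset_Ioi _ _ _)
    (support_indicator_Ioc_subset_Ioi _ _ _) (eqOn_indicator (s := Ioc 0 b)) eqOn_indicator

theorem truncatedRLKernel_convolution_eqOn (hα : 0 < α) (hβ : 0 < β) :
    EqOn (truncatedRLKernel b α ⋆ truncatedRLKernel b β)
      (fun t => t ^ (α + β - 1) / Real.Gamma (α + β)) (Ioc 0 b) := fun _ ht =>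
  (indicator_convolution_truncatedRLKernel_eqOn hβ.ne' _ (Ioc_subset_Icc_self ht)).trans
    (RL_rpow_div_Gamma hα hβ ht.1)

theorem integrableOn_RL (hα : 0 ≤ α) (hf : IntegrableOn f (Icc 0 b)) :
    IntegrableOn (RL α f) (Icc 0 b) := by
  rcases hα.eq_or_lt with rfl | hα
  · rwa [RL_zero]
  · exact (((integrable_indicator_Ioc hf).integrable_convolution _
      (integrable_truncatedRLKernel b hα)).integrableOn).congr_fun
      (indicator_convolution_truncatedRLKernel_eqOn hα.ne' f) measurableSet_Icc

theorem RL_RL_ae_eq_RL_add (hα : 0 ≤ α) (hβ : 0 ≤ β) (hf : IntegrableOn f (Icc 0 b)) :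
    RL β (RL α f) =ᵐ[volume.restrict (Icc 0 b)] RL (α + β) f := by
  rcases hα.eq_or_lt with rfl | hα
  · rw [RL_zero, zero_add]
  rcases hβ.eq_or_lt with rfl | hβ
  · rw [RL_zero, add_zero]
  set F := (Ioc 0 b).indicator f
  have hF : Function.support F ⊆ Ioi 0 := support_indicator_Ioc_subset_Ioi 0 b f
  have hK (γ : ℝ) : Function.support (truncatedRLKernel b γ) ⊆ Ioi 0 :=
    support_indicator_Ioc_subset_Ioi 0 b _
  have hassoc := ae_convolution_lsmul_assoc (integrable_indicator_Ioc hf)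
    (integrable_truncatedRLKernel b hα) (integrable_truncatedRLKernel b hβ)
  have hleft : EqOn ((F ⋆ truncatedRLKernel b α) ⋆ truncatedRLKernel b β)
      (RL β (RL α f)) (Icc 0 b) :=
    convolution_eqOn_RL hβ.ne' (support_convolution_subset_Ioi hF (hK α)) (hK β)
      ((indicator_convolution_truncatedRLKernel_eqOn hα.ne' f).mono Ioc_subset_Icc_self)
      eqOn_indicator
  have hright : EqOn (F ⋆ (truncatedRLKernel b α ⋆ truncatedRLKernel b β))
      (RL (α + β) f) (Icc 0 b) :=
    convolution_eqOn_RL (add_pos hα hβ).ne' hF (support_convolution_subset_Ioi (hK α) (hK β))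
      eqOn_indicator (truncatedRLKernel_convolution_eqOn hα hβ)
  filter_upwards [ae_restrict_of_ae hassoc, ae_restrict_mem measurableSet_Icc] with t htassoc ht
  rw [← hleft ht, htassoc, hright ht]

theorem RL_natCast_ae_eq_iterate (hf : IntegrableOn f (Icc 0 b)) (n : ℕ) :
    RL n f =ᵐ[volume.restrict (Icc 0 b)] (RL 1)^[n] f := by
  induction n with
  | zero => simp [RL_zero]
  | succ n ih =>
    rw [Function.iterate_succ_apply', Nat.cast_succ]
    exact (RL_RL_ae_eq_RL_add n.cast_nonneg zero_le_one hf).symm.trans (RL_congr_ae ih)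

theorem RL_sub_RL_ae_eq_iterate {n : ℕ} (hα : 0 ≤ α) (hn : α ≤ n)
    (hf : IntegrableOn f (Icc 0 b)) :
    RL (n - α) (RL α f) =ᵐ[volume.restrict (Icc 0 b)] (RL 1)^[n] f := by
  have hsemigroup := RL_RL_ae_eq_RL_add hα (sub_nonneg.2 hn) hf
  rw [add_sub_cancel] at hsemigroup
  exact hsemigroup.trans (RL_natCast_ae_eq_iterate hf n)

end RL

section RLOne

variable {b : ℝ} {f g : ℝ → ℝ}

theorem integrableOn_iterate_RL_one (hf : IntegrableOn f (Icc 0 b)) (n : ℕ) :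
    IntegrableOn ((RL 1)^[n] f) (Icc 0 b) := by
  induction n with
  | zero => exact hf
  | succ n ih =>
    rw [Function.iterate_succ_apply']
    exact integrableOn_RL zero_le_one ih

theorem continuousOn_RL_one (hf : IntegrableOn f (Icc 0 b)) :
    ContinuousOn (RL 1 f) (Icc 0 b) := by
  refine (intervalIntegral.continuousOn_primitive hf).congr fun t ht => ?_
  rw [RL_one_apply, intervalIntegral.integral_of_le ht.1]

theorem continuousOn_iterate_RL_one (hf : IntegrableOn f (Icc 0 b)) {n : ℕ} (hn : n ≠ 0) :
    ContinuousOn ((RL 1)^[n] f) (Icc 0 b) := by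
  obtain ⟨m, rfl⟩ := Nat.exists_eq_succ_of_ne_zero hn
  rw [Function.iterate_succ_apply']
  exact continuousOn_RL_one (integrableOn_iterate_RL_one hf m)

theorem hasDerivWithinAt_RL_one (hf : ContinuousOn f (Icc 0 b)) {t : ℝ} (ht : t ∈ Icc 0 b) :
    HasDerivWithinAt (RL 1 f) (f t) (Icc 0 b) t := by
  have : Fact (t ∈ Icc 0 b) := ⟨ht⟩
  have hint : IntervalIntegrable f volume 0 t :=
    (hf.mono (Icc_subset_Icc_right ht.2)).intervalIntegrable_of_Icc ht.1
  rw [funext (RL_one_apply f)]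
  exact intervalIntegral.integral_hasDerivWithinAt_right hint
    (hf.stronglyMeasurableAtFilter_nhdsWithin measurableSet_Icc t) (hf t ht)

theorem derivWithin_RL_one_ae_eq (hb : 0 < b) (hf : IntegrableOn f (Icc 0 b)) :
    derivWithin (RL 1 f) (Icc 0 b) =ᵐ[volume.restrict (Icc 0 b)] f := by
  have hderiv := ((intervalIntegrable_iff_integrableOn_Icc_of_le hb.le).2 hf).ae_hasDerivAt_integral
  rw [uIcc_of_le hb.le] at hderiv
  filter_upwards [ae_restrict_of_ae hderiv, ae_restrict_mem measurableSet_Icc] with t hd ht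
  rw [funext (RL_one_apply f)]
  exact (hd ht 0 (left_mem_Icc.2 hb.le)).hasDerivWithinAt.derivWithin (uniqueDiffOn_Icc hb t ht)

theorem ae_eq_of_RL_one_ae_eq (hb : 0 < b) (hf : IntegrableOn f (Icc 0 b))
    (hg : IntegrableOn g (Icc 0 b)) (h : RL 1 f =ᵐ[volume.restrict (Icc 0 b)] RL 1 g) :
    f =ᵐ[volume.restrict (Icc 0 b)] g := by
  have heq : EqOn (RL 1 f) (RL 1 g) (Icc 0 b) :=
    Measure.eqOn_Icc_of_ae_eq volume hb.ne h (continuousOn_RL_one hf) (continuousOn_RL_one hg)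
  have hderiv : derivWithin (RL 1 f) (Icc 0 b)
      =ᵐ[volume.restrict (Icc 0 b)] derivWithin (RL 1 g) (Icc 0 b) := by
    filter_upwards [ae_restrict_mem measurableSet_Icc] with t ht
    exact derivWithin_congr heq (heq ht)
  exact (derivWithin_RL_one_ae_eq hb hf).symm.trans
    (hderiv.trans (derivWithin_RL_one_ae_eq hb hg))

theorem ae_eq_of_iterate_RL_one_ae_eq (hb : 0 < b) (hf : IntegrableOn f (Icc 0 b))
    (hg : IntegrableOn g (Icc 0 b)) {n : ℕ}
    (h : (RL 1)^[n] f =ᵐ[volume.restrict (Icc 0 b)] (RL 1)^[n] g) :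
    f =ᵐ[volume.restrict (Icc 0 b)] g := by
  induction n with
  | zero => exact h
  | succ n ih =>
    rw [Function.iterate_succ_apply', Function.iterate_succ_apply'] at h
    exact ih (ae_eq_of_RL_one_ae_eq hb (integrableOn_iterate_RL_one hf n)
      (integrableOn_iterate_RL_one hg n) h)

theorem eqOn_RL_one_iff (hb : 0 < b) (hf : ContinuousOn f (Icc 0 b)) :
    EqOn g (RL 1 f) (Icc 0 b) ↔
      DifferentiableOn ℝ g (Icc 0 b) ∧ g 0 = 0 ∧
        EqOn (derivWithin g (Icc 0 b)) f (Icc 0 b) := by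
  have hdiff : DifferentiableOn ℝ (RL 1 f) (Icc 0 b) := fun _ ht =>
    (hasDerivWithinAt_RL_one hf ht).differentiableWithinAt
  have hderiv : EqOn (derivWithin (RL 1 f) (Icc 0 b)) f (Icc 0 b) := fun t ht =>
    (hasDerivWithinAt_RL_one hf ht).derivWithin (uniqueDiffOn_Icc hb t ht)
  constructor
  · intro h
    exact ⟨hdiff.congr h, (h (left_mem_Icc.2 hb.le)).trans (RL_one_apply_zero f),
      fun t ht => (derivWithin_congr h (h ht)).trans (hderiv ht)⟩
  · rintro ⟨hg, hg0, hg'⟩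
    exact eq_of_derivWithin_eq hg hdiff ((hg'.trans hderiv.symm).mono Ico_subset_Icc_self)
      (hg0.trans (RL_one_apply_zero f).symm)

end RLOne

theorem RL_ae_eq_RL_iff {b α : ℝ} {f g : ℝ → ℝ} (hb : 0 < b) (hα : 0 ≤ α)
    (hf : IntegrableOn f (Icc 0 b)) (hg : IntegrableOn g (Icc 0 b)) :
    RL α f =ᵐ[volume.restrict (Icc 0 b)] RL α g ↔ f =ᵐ[volume.restrict (Icc 0 b)] g := by
  refine ⟨fun h => ?_, RL_congr_ae⟩
  have hceil : α ≤ ⌈α⌉₊ := Nat.le_ceil α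
  exact ae_eq_of_iterate_RL_one_ae_eq hb hf hg <|
    (RL_sub_RL_ae_eq_iterate hα hceil hf).symm.trans <|
      (RL_congr_ae h).trans (RL_sub_RL_ae_eq_iterate hα hceil hg)

theorem ae_eq_RL_iff_RL_sub_ae_eq_iterate {b α : ℝ} {f φ : ℝ → ℝ} {n : ℕ} (hb : 0 < b)
    (hα : 0 ≤ α) (hn : α ≤ n) (hf : IntegrableOn f (Icc 0 b)) (hφ : IntegrableOn φ (Icc 0 b)) :
    f =ᵐ[volume.restrict (Icc 0 b)] RL α φ ↔
      RL (n - α) f =ᵐ[volume.restrict (Icc 0 b)] (RL 1)^[n] φ := by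
  have hcomp := RL_sub_RL_ae_eq_iterate hα hn hφ
  rw [← RL_ae_eq_RL_iff hb (sub_nonneg.2 hn) hf (integrableOn_RL hα hφ)]
  exact ⟨fun h => h.trans hcomp, fun h => h.trans hcomp.symm⟩

section AbsolutelyContinuous

variable {b : ℝ} {g : ℝ → ℝ}

theorem MemAC.continuousOn (hg : MemAC b g) : ContinuousOn g (Icc 0 b) := by
  obtain ⟨φ, hφ, hgφ⟩ := hg
  refine ((continuousOn_const (c := g 0)).add (continuousOn_RL_one hφ)).congr fun t ht => ?_
  rw [hgφ t ht, Pi.add_apply, RL_one_apply]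

theorem memACn_one_iff : MemACn b 1 g ↔ MemAC b g := by
  simp only [MemACn, Nat.sub_self, iteratedDerivWithin_zero, Nat.cast_zero, contDiffOn_zero]
  exact and_iff_right_of_imp MemAC.continuousOn

theorem memACn_add_two_iff (hb : 0 < b) (n : ℕ) :
    MemACn b (n + 2) g ↔ DifferentiableOn ℝ g (Icc 0 b) ∧
      MemACn b (n + 1) (derivWithin g (Icc 0 b)) := by
  simp only [MemACn, Nat.add_sub_cancel, Nat.add_succ_sub_one, iteratedDerivWithin_succ',
    Nat.cast_succ, contDiffOn_succ_iff_derivWithin (uniqueDiffOn_Icc hb)]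
  simp [and_assoc]

theorem memAC_and_apply_zero_iff (hb : 0 ≤ b) :
    MemAC b g ∧ g 0 = 0 ↔ ∃ φ, IntegrableOn φ (Icc 0 b) ∧ EqOn g (RL 1 φ) (Icc 0 b) := by
  constructor
  · rintro ⟨⟨φ, hφ, hgφ⟩, hg0⟩
    refine ⟨φ, hφ, fun t ht => ?_⟩
    rw [hgφ t ht, hg0, zero_add, RL_one_apply]
  · rintro ⟨φ, hφ, hgφ⟩
    have hg0 : g 0 = 0 := (hgφ (left_mem_Icc.2 hb)).trans (RL_one_apply_zero φ)
    refine ⟨⟨φ, hφ, fun t ht => ?_⟩, hg0⟩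
    rw [hgφ ht, hg0, zero_add, RL_one_apply]

theorem memACn_and_iteratedDerivWithin_eq_zero_iff (hb : 0 < b) {n : ℕ} (hn : n ≠ 0) :
    (MemACn b n g ∧ ∀ s < n, iteratedDerivWithin s g (Icc 0 b) 0 = 0) ↔
      ∃ φ, IntegrableOn φ (Icc 0 b) ∧ EqOn g ((RL 1)^[n] φ) (Icc 0 b) := by
  obtain ⟨m, rfl⟩ := Nat.exists_eq_add_one_of_ne_zero hn
  clear hn
  induction m generalizing g with
  | zero => simpa [memACn_one_iff] using memAC_and_apply_zero_iff hb.le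
  | succ m ih =>
    simp only [memACn_add_two_iff hb, Nat.forall_lt_succ_left (n := m + 1),
      iteratedDerivWithin_zero, iteratedDerivWithin_succ']
    rw [and_and_and_comm, ih, ← exists_and_left]
    refine exists_congr fun φ => ?_
    rw [and_left_comm, Function.iterate_succ_apply' (RL 1) (m + 1)]
    refine and_congr_right fun hφ => ?_
    rw [eqOn_RL_one_iff hb (continuousOn_iterate_RL_one hφ m.succ_ne_zero), and_assoc]

end AbsolutelyContinuous

/-- `f ∈ I^α(L¹[0,b])` if and only if `f ∈ X_α` and all the derivatives
`D^s(I^{⌈α⌉-α} f)(0)`, `s = 0, …, ⌈α⌉-1` (computed on the `AC^{⌈α⌉}` representative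
of `I^{⌈α⌉-α} f`), vanish. -/
theorem mem_range_RL_iff (b : ℝ) (hb : 0 < b) (α : ℝ) (hα : 0 < α) (f : ℝ → ℝ)
    (hf : IntegrableOn f (Set.Icc 0 b) volume) :
    (∃ g : ℝ → ℝ, IntegrableOn g (Set.Icc 0 b) volume ∧
        f =ᵐ[volume.restrict (Set.Icc 0 b)] RL α g) ↔
      (MemX b α f ∧ ∀ g : ℝ → ℝ,
        g =ᵐ[volume.restrict (Set.Icc 0 b)] RL ((⌈α⌉₊ : ℝ) - α) f →
        MemACn b ⌈α⌉₊ g →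
        ∀ s < ⌈α⌉₊, iteratedDerivWithin s g (Set.Icc 0 b) 0 = 0) := by
  have hn : ⌈α⌉₊ ≠ 0 := (Nat.ceil_pos.2 hα).ne'
  have hrange {φ : ℝ → ℝ} (hφ : IntegrableOn φ (Icc 0 b)) :
      f =ᵐ[volume.restrict (Icc 0 b)] RL α φ ↔
        RL (⌈α⌉₊ - α) f =ᵐ[volume.restrict (Icc 0 b)] (RL 1)^[⌈α⌉₊] φ :=
    ae_eq_RL_iff_RL_sub_ae_eq_iterate hb hα.le (Nat.le_ceil α) hf hφ
  constructor
  · rintro ⟨φ, hφ, hfφ⟩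
    have hrep := (hrange hφ).1 hfφ
    have hprim {g : ℝ → ℝ} (hg : EqOn g ((RL 1)^[⌈α⌉₊] φ) (Icc 0 b)) :=
      (memACn_and_iteratedDerivWithin_eq_zero_iff hb hn).2 ⟨φ, hφ, hg⟩
    refine ⟨⟨hf, fun _ => ⟨_, hrep.symm, (hprim (eqOn_refl _ _)).1⟩⟩, fun g hg hgAC => ?_⟩
    exact (hprim (Measure.eqOn_Icc_of_ae_eq volume hb.ne (hg.trans hrep) hgAC.1.continuousOn
      (continuousOn_iterate_RL_one hφ hn))).2
  · rintro ⟨⟨-, hX⟩, hzero⟩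
    obtain ⟨g, hgf, hgAC⟩ := hX hα.ne'
    obtain ⟨φ, hφ, hgφ⟩ :=
      (memACn_and_iteratedDerivWithin_eq_zero_iff hb hn).1 ⟨hgAC, hzero g hgf hgAC⟩
    have hrep := hgf.symm.trans (hgφ.aeEq_restrict measurableSet_Icc)
    exact ⟨φ, hφ, (hrange hφ).2 hrep⟩
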